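/- arXiv:1807.08999 — 4 statements merged into one kernel-verified Lean document; each statement's English description precedes it below -/
import Mathlib

section
/- Let c₁, c₂ > 0, let z, h be real, and let S₁, S₂, S₃, S₄ > 0. Let S = diag(S₁, S₂, S₃, S₄), let H be the 4×4 real matrix with rows (0, c₁, 1, 0), (1−z, 0, 0, 0), (0, 0, 0, 1−c₂h), (0, −c₂, 1, 0), and let G be the 4×4 real matrix with rows (1+z, 0, 0, 0), (0, −c₁, 1, 0), (0, c₂, 1, 0), (0, 0, 0, 1+c₂h); define Ψ̃(c₁,z) = HᵀSH − GᵀSG. Then Ψ̃(c₁,z) is negative definite if and only if the following three conditions hold: (i) Φ(z) := S₂(z−1)² − S₁(z+1)² < 0; (ii) the symmetric 2×2 matrix Θ(c₁) with entries Θ₁₁ = (S₁−S₂)c₁² − (S₃−S₄)c₂², Θ₁₂ = Θ₂₁ = (S₁+S₂)c₁ − (S₃+S₄)c₂, Θ₂₂ = S₁−S₂−S₃+S₄ is negative definite; and (iii) Ξ := S₃(1−c₂h)² − S₄(1+c₂h)² < 0. -/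
/-! The quadratic form of `Ψ` is the sum of the forms of the three blocks `Φ(z)`, `Θ(c₁)`, `Ξ` in
the coordinates (1), (2,3), (4). Testing it on vectors supported on one block gives the
forward direction; conversely, each summand is nonpositive and at least one is negative at a
nonzero vector. -/

open Matrix

/-- A real square matrix `M` is negative definite if `ξᵀMξ < 0` for every nonzero `ξ`. -/
def NegDef {n : ℕ} (M : Matrix (Fin n) (Fin n) ℝ) : Prop :=
  ∀ ξ : Fin n → ℝ, ξ ≠ 0 → ξ ⬝ᵥ M.mulVec ξ < 0

/-- Block-diagonal characterization of the stability matrix `Ψ̃ = HᵀSH − GᵀSG`: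
it is negative definite iff `Φ(z) < 0`, the 2×2 block `Θ(c₁)` is negative definite,
and `Ξ < 0`. -/
theorem psiTilde_negdef_iff_blocks
    (c₁ c₂ z h S₁ S₂ S₃ S₄ : ℝ) (hc₁ : 0 < c₁) (hc₂ : 0 < c₂)
    (hS₁ : 0 < S₁) (hS₂ : 0 < S₂) (hS₃ : 0 < S₃) (hS₄ : 0 < S₄)
    (S : Matrix (Fin 4) (Fin 4) ℝ)
    (hS : S = Matrix.diagonal ![S₁, S₂, S₃, S₄])
    (H : Matrix (Fin 4) (Fin 4) ℝ)
    (hH : H = !![0, c₁, 1, 0;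
                 1 - z, 0, 0, 0;
                 0, 0, 0, 1 - c₂ * h;
                 0, -c₂, 1, 0])
    (G : Matrix (Fin 4) (Fin 4) ℝ)
    (hG : G = !![1 + z, 0, 0, 0;
                 0, -c₁, 1, 0;
                 0, c₂, 1, 0;
                 0, 0, 0, 1 + c₂ * h])
    (Ψ : Matrix (Fin 4) (Fin 4) ℝ)
    (hΨ : Ψ = Hᵀ * S * H - Gᵀ * S * G)
    (Θ : Matrix (Fin 2) (Fin 2) ℝ)
    (hΘ : Θ = !![(S₁ - S₂) * c₁ ^ 2 - (S₃ - S₄) * c₂ ^ 2,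
                 (S₁ + S₂) * c₁ - (S₃ + S₄) * c₂;
                 (S₁ + S₂) * c₁ - (S₃ + S₄) * c₂,
                 S₁ - S₂ - S₃ + S₄]) :
    NegDef Ψ ↔
      (S₂ * (z - 1) ^ 2 - S₁ * (z + 1) ^ 2 < 0 ∧
       NegDef Θ ∧
       S₃ * (1 - c₂ * h) ^ 2 - S₄ * (1 + c₂ * h) ^ 2 < 0) := by
  -- The quadratic form of `Ψ` splits along the coordinates (1), (2,3), (4).
  have key : ∀ ξ : Fin 4 → ℝ, ξ ⬝ᵥ Ψ.mulVec ξ =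
      (S₂ * (z - 1) ^ 2 - S₁ * (z + 1) ^ 2) * ξ 0 ^ 2
      + ![ξ 1, ξ 2] ⬝ᵥ Θ.mulVec ![ξ 1, ξ 2]
      + (S₃ * (1 - c₂ * h) ^ 2 - S₄ * (1 + c₂ * h) ^ 2) * ξ 3 ^ 2 := by
    intro ξ
    subst hΨ hΘ hS hH hG
    simp [dotProduct, Matrix.mulVec, Matrix.mul_apply, Fin.sum_univ_four, Fin.sum_univ_two,
      Matrix.diagonal_apply]
    ring
  constructor
  · intro hN
    refine ⟨?_, ?_, ?_⟩
    · have := hN ![1, 0, 0, 0] (fun e => by simpa using congrFun e 0)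
      rw [key] at this
      simpa [dotProduct, Matrix.mulVec, Fin.sum_univ_two] using this
    · intro η hη
      have e : ![η 0, η 1] = η := by
        ext i; fin_cases i <;> rfl
      have := hN ![0, η 0, η 1, 0] (fun e' => hη (by
        ext i
        fin_cases i
        · simpa using congrFun e' 1
        · simpa using congrFun e' 2))
      rw [key] at this
      simpa [e] using this
    · have := hN ![0, 0, 0, 1] (fun e => by simpa using congrFun e 3)
      rw [key] at this
      simpa [dotProduct, Matrix.mulVec, Fin.sum_univ_two] using this
  · rintro ⟨h1, h2, h3⟩ ξ hξ
    rw [key]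
    have a1 := mul_nonpos_of_nonpos_of_nonneg h1.le (sq_nonneg (ξ 0))
    have a3 := mul_nonpos_of_nonpos_of_nonneg h3.le (sq_nonneg (ξ 3))
    by_cases hm : ![ξ 1, ξ 2] = 0
    · have e1 : ξ 1 = 0 := by simpa using congrFun hm 0
      have e2 : ξ 2 = 0 := by simpa using congrFun hm 1
      rw [hm, zero_dotProduct]
      by_cases e0 : ξ 0 = 0
      · have e3 : ξ 3 ≠ 0 := fun e3 => hξ (by
          ext i; fin_cases i <;> assumption)
        have := mul_neg_of_neg_of_pos h3 (pow_pos (abs_pos.mpr e3) 2)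
        rw [sq_abs] at this
        linarith
      · have := mul_neg_of_neg_of_pos h1 (pow_pos (abs_pos.mpr e0) 2)
        rw [sq_abs] at this
        linarith
    · have := h2 _ hm
      linarith
end

section
/- Let c₁, c₂ > 0, g > 0, h > 0, and set z = c₁g. Then there exist S₁, S₂, S₃, S₄ > 0 such that the 4×4 symmetric matrix Ψ̃(c₁,z) = HᵀSH − GᵀSG is negative definite, where S = diag(S₁, S₂, S₃, S₄), H is the 4×4 matrix with rows (0, c₁, 1, 0), (1−z, 0, 0, 0), (0, 0, 0, 1−c₂h), (0, −c₂, 1, 0), and G is the 4×4 matrix with rows (1+z, 0, 0, 0), (0, −c₁, 1, 0), (0, c₂, 1, 0), (0, 0, 0, 1+c₂h). -/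
/-!
With `S₁ = S₂ = 1/2`, `S₃ = m + ε/2`, `S₄ = m - ε/2` and `m = c₁/(2c₂)`, all cross terms of the
quadratic form cancel: since `c₂ (S₃ + S₄) = c₁`, it equals
`-2z ξ₀² - ε (c₂² ξ₁² + ξ₂²) - (4mk - ε(1 + k²)) ξ₃²`, where `k = c₂h`.
The choice `ε = 2mk/(1 + k²)` makes the last coefficient `-2mk < 0`, and keeps `S₄ > 0`
because `k < 1 + k²`.
-/

open Matrix

/-- Feasibility of the stability LMI for a stable wave (`g > 0`) and a damping controller
(`h > 0`): there exist positive `S₁, S₂, S₃, S₄` making `Ψ̃ = HᵀSH − GᵀSG` negative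
definite, where `z = c₁ g`. -/
theorem stable_wave_lmi_feasible
    (c₁ c₂ g h z : ℝ) (hc₁ : 0 < c₁) (hc₂ : 0 < c₂) (hg : 0 < g) (hh : 0 < h)
    (hz : z = c₁ * g)
    (H : Matrix (Fin 4) (Fin 4) ℝ)
    (hH : H = !![0, c₁, 1, 0;
                 1 - z, 0, 0, 0;
                 0, 0, 0, 1 - c₂ * h;
                 0, -c₂, 1, 0])
    (G : Matrix (Fin 4) (Fin 4) ℝ)
    (hG : G = !![1 + z, 0, 0, 0;
                 0, -c₁, 1, 0;
                 0, c₂, 1, 0;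
                 0, 0, 0, 1 + c₂ * h]) :
    ∃ S₁ S₂ S₃ S₄ : ℝ, 0 < S₁ ∧ 0 < S₂ ∧ 0 < S₃ ∧ 0 < S₄ ∧
      NegDef (Hᵀ * Matrix.diagonal ![S₁, S₂, S₃, S₄] * H -
              Gᵀ * Matrix.diagonal ![S₁, S₂, S₃, S₄] * G) := by
  have hz0 : 0 < z := hz ▸ mul_pos hc₁ hg
  obtain ⟨k, hk⟩ : ∃ k, k = c₂ * h := ⟨_, rfl⟩
  have hk0 : 0 < k := hk ▸ mul_pos hc₂ hh
  obtain ⟨m, hm⟩ : ∃ m, m = c₁ / (2 * c₂) := ⟨_, rfl⟩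
  have hm0 : 0 < m := by rw [hm]; positivity
  have hmc : c₁ = 2 * m * c₂ := by rw [hm]; field_simp
  obtain ⟨ε, hε⟩ : ∃ ε, ε = 2 * m * k / (1 + k ^ 2) := ⟨_, rfl⟩
  have hε0 : 0 < ε := by rw [hε]; positivity
  have hεk : ε * (1 + k ^ 2) = 2 * m * k := by rw [hε]; field_simp
  have hεm : ε < 2 * m := by
    rw [hε, div_lt_iff₀ (by positivity)]
    have : k < 1 + k ^ 2 := by nlinarith [sq_nonneg (k - 1)]
    nlinarith
  refine ⟨1 / 2, 1 / 2, m + ε / 2, m - ε / 2, by norm_num, by norm_num, by linarith,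
    by linarith, ?_⟩
  intro ξ hξ
  have key : ξ ⬝ᵥ (Hᵀ * Matrix.diagonal ![1 / 2, 1 / 2, m + ε / 2, m - ε / 2] * H -
      Gᵀ * Matrix.diagonal ![1 / 2, 1 / 2, m + ε / 2, m - ε / 2] * G).mulVec ξ =
      -(2 * z * ξ 0 ^ 2 + ε * c₂ ^ 2 * ξ 1 ^ 2 + ε * ξ 2 ^ 2 + 2 * m * k * ξ 3 ^ 2) := by
    rw [hH, hG, ← hk]
    simp [Matrix.mul_apply, Matrix.mulVec, dotProduct, Fin.sum_univ_four, Matrix.diagonal_apply]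
    rw [hmc]
    linear_combination ξ 3 ^ 2 * hεk
  rw [key, neg_lt_zero]
  have h0 : 0 ≤ 2 * z * ξ 0 ^ 2 := by positivity
  have h1 : 0 ≤ ε * c₂ ^ 2 * ξ 1 ^ 2 := by positivity
  have h2 : 0 ≤ ε * ξ 2 ^ 2 := by positivity
  have h3 : 0 ≤ 2 * m * k * ξ 3 ^ 2 := by positivity
  obtain ⟨i, hi⟩ := Function.ne_iff.mp hξ
  have hi' : ξ i ≠ 0 := hi
  fin_cases i
  · have : 0 < 2 * z * ξ 0 ^ 2 := mul_pos (by positivity) (sq_pos_iff.mpr hi')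
    linarith
  · have : 0 < ε * c₂ ^ 2 * ξ 1 ^ 2 := mul_pos (by positivity) (sq_pos_iff.mpr hi')
    linarith
  · have : 0 < ε * ξ 2 ^ 2 := mul_pos (by positivity) (sq_pos_iff.mpr hi')
    linarith
  · have : 0 < 2 * m * k * ξ 3 ^ 2 := mul_pos (by positivity) (sq_pos_iff.mpr hi')
    linarith
end

section
/- Let c₂ > 0, let S₁, S₂, S₃, S₄ > 0 with S₂ < S₁, and let 0 < c_min ≤ c_max. For c ∈ ℝ let Θ(c) be the symmetric 2×2 matrix with entries Θ₁₁ = (S₁−S₂)c² − (S₃−S₄)c₂², Θ₁₂ = Θ₂₁ = (S₁+S₂)c − (S₃+S₄)c₂, Θ₂₂ = S₁−S₂−S₃+S₄. If Θ(c_min) and Θ(c_max) are negative definite, then Θ(c) is negative definite for every c ∈ [c_min, c_max]. -/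
/-!
For a fixed vector `ξ`, the value `ξᵀ Θ(c) ξ` is a quadratic polynomial in `c` with leading
coefficient `(S₁ - S₂) ξ₀² ≥ 0`, hence a convex function of `c`. A convex function that is negative
at both endpoints of an interval is negative on the whole interval, so no Schur complement is needed.
-/

open Matrix

/-- Convexity-in-speed step of the robustness theorem: if the middle block
`Θ(c)` of the stability matrix is negative definite at the extreme speeds `c_min` and
`c_max` (and `S₂ < S₁`), then it is negative definite for every speed
`c ∈ [c_min, c_max]`. -/
theorem theta_negdef_on_interval
    (c₂ S₁ S₂ S₃ S₄ cmin cmax : ℝ) (hc₂ : 0 < c₂)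
    (hS₁ : 0 < S₁) (hS₂ : 0 < S₂) (hS₃ : 0 < S₃) (hS₄ : 0 < S₄)
    (hS₂₁ : S₂ < S₁) (hcmin : 0 < cmin) (hminmax : cmin ≤ cmax)
    (Θ : ℝ → Matrix (Fin 2) (Fin 2) ℝ)
    (hΘ : ∀ c : ℝ, Θ c = !![(S₁ - S₂) * c ^ 2 - (S₃ - S₄) * c₂ ^ 2,
                            (S₁ + S₂) * c - (S₃ + S₄) * c₂;
                            (S₁ + S₂) * c - (S₃ + S₄) * c₂,
                            S₁ - S₂ - S₃ + S₄])
    (hmin : NegDef (Θ cmin)) (hmax : NegDef (Θ cmax)) :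
    ∀ c ∈ Set.Icc cmin cmax, NegDef (Θ c) := by
  intro c hc ξ hξ
  have h₁ := hmin ξ hξ
  have h₂ := hmax ξ hξ
  rw [← segment_eq_Icc hminmax] at hc
  obtain ⟨a, b, ha, hb, hab, rfl⟩ := hc
  simp only [hΘ, Matrix.mulVec, dotProduct, Fin.sum_univ_two, Matrix.of_apply, Matrix.cons_val',
    Matrix.cons_val_zero, Matrix.cons_val_one, Matrix.cons_val_fin_one, smul_eq_mul] at h₁ h₂ ⊢
  obtain rfl : b = 1 - a := by linarith
  -- The convexity defect: the quadratic form at the convex combination of the endpoints is the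
  -- convex combination of its endpoint values minus this nonnegative quantity.
  have hdef : 0 ≤ a * (1 - a) * ((S₁ - S₂) * (ξ 0 * (cmin - cmax)) ^ 2) :=
    mul_nonneg (mul_nonneg ha hb) (mul_nonneg (sub_nonneg.2 hS₂₁.le) (sq_nonneg _))
  rcases ha.eq_or_lt with rfl | ha'
  · convert h₂ using 1
    ring
  · nlinarith [mul_neg_of_pos_of_neg ha' h₁, mul_nonpos_of_nonneg_of_nonpos hb h₂.le]
end

section
/- Let c₂ > 0, let h ∈ ℝ, let S₁, S₂, S₃, S₄ > 0, let 0 < c_min ≤ c_max, and let D ⊆ ℝ with −1 ∉ D. Suppose z_max ∈ D satisfies |(1−z)/(1+z)| ≤ |(1−z_max)/(1+z_max)| for all z ∈ D, and that δ_max := |(1−z_max)/(1+z_max)| ≥ 1. For reals c and z define the 4×4 symmetric matrix Ψ̃(c,z) = HᵀSH − GᵀSG, where S = diag(S₁, S₂, S₃, S₄), H is the 4×4 matrix with rows (0, c, 1, 0), (1−z, 0, 0, 0), (0, 0, 0, 1−c₂h), (0, −c₂, 1, 0), and G is the 4×4 matrix with rows (1+z, 0, 0, 0), (0, −c, 1,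 0), (0, c₂, 1, 0), (0, 0, 0, 1+c₂h). If Ψ̃(c_min, z_max) and Ψ̃(c_max, z_max) are negative definite, then Ψ̃(c, z) is negative definite for every c ∈ [c_min, c_max] and every z ∈ D. -/
/-!
The quadratic form of `Ψ̃(c,z)` splits as
`(S₂(1-z)² - S₁(1+z)²) ξ₀² + q(c; ξ₁, ξ₂) + k ξ₃²`, where `k` does not depend on `c` or `z`
and `q` is quadratic in `c` with leading coefficient `(S₁ - S₂) ξ₁²`.
Negativity at `ξ = e₀` and `z = z_max` says `δ_max² S₂ < S₁`. Since every `z ∈ D` has reflection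
coefficient of modulus at most `δ_max`, the `ξ₀²` coefficient is negative on all of `D`; since
`δ_max ≥ 1`, also `S₂ < S₁`, so the form is convex in `c` and negativity at the two extreme speeds
propagates to the whole interval.
-/

open Matrix

/-- The part of the quadratic form of `Ψ̃(c,z)` not involving `ξ₀`, evaluated at
`(ξ₁, ξ₂, ξ₃) = (x, y, w)`. -/
def innerForm (c₂ h S₁ S₂ S₃ S₄ c x y w : ℝ) : ℝ :=
  S₁ * (c * x + y) ^ 2 - S₂ * (y - c * x) ^ 2 + S₄ * (y - c₂ * x) ^ 2 - S₃ * (c₂ * x + y) ^ 2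
    + (S₃ * (1 - c₂ * h) ^ 2 - S₄ * (1 + c₂ * h) ^ 2) * w ^ 2

/-- Convexity of `innerForm` in the speed `c`, which needs `S₂ ≤ S₁`. -/
lemma innerForm_neg_of_endpoints {c₂ h S₁ S₂ S₃ S₄ cmin cmax c x y w : ℝ} (hS : S₂ ≤ S₁)
    (hc : c ∈ Set.Icc cmin cmax)
    (h₁ : innerForm c₂ h S₁ S₂ S₃ S₄ cmin x y w < 0)
    (h₂ : innerForm c₂ h S₁ S₂ S₃ S₄ cmax x y w < 0) :
    innerForm c₂ h S₁ S₂ S₃ S₄ c x y w < 0 := by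
  rw [← segment_eq_Icc (hc.1.trans hc.2)] at hc
  obtain ⟨a, b, ha, hb, hab, rfl⟩ := hc
  obtain rfl : b = 1 - a := by linarith
  have key : innerForm c₂ h S₁ S₂ S₃ S₄ (a • cmin + (1 - a) • cmax) x y w =
      a * innerForm c₂ h S₁ S₂ S₃ S₄ cmin x y w
        + (1 - a) * innerForm c₂ h S₁ S₂ S₃ S₄ cmax x y w
        - a * (1 - a) * ((S₁ - S₂) * (x * (cmax - cmin)) ^ 2) := by
    simp only [innerForm, smul_eq_mul]
    ring
  have hgap : 0 ≤ a * (1 - a) * ((S₁ - S₂) * (x * (cmax - cmin)) ^ 2) :=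
    mul_nonneg (mul_nonneg ha hb) (mul_nonneg (sub_nonneg.2 hS) (sq_nonneg _))
  have hchord : a * innerForm c₂ h S₁ S₂ S₃ S₄ cmin x y w
      + (1 - a) * innerForm c₂ h S₁ S₂ S₃ S₄ cmax x y w < 0 := by
    rcases ha.eq_or_lt with rfl | ha'
    · simpa using h₂
    · linarith [mul_neg_of_pos_of_neg ha' h₁, mul_nonpos_of_nonneg_of_nonpos hb h₂.le]
  linarith

/-- Finite-dimensional core of the robustness theorem: if the stability matrix
`Ψ̃(c,z) = HᵀSH − GᵀSG` is negative definite at the two extreme speeds `c_min, c_max` and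
at the worst-case reflection coefficient `z_max` (whose modulus `δ_max ≥ 1` dominates over
the uncertainty set `D`), then `Ψ̃(c,z)` is negative definite for every
`c ∈ [c_min, c_max]` and every `z ∈ D`. -/
theorem psiTilde_negdef_robust
    (c₂ h S₁ S₂ S₃ S₄ cmin cmax : ℝ) (hc₂ : 0 < c₂)
    (hS₁ : 0 < S₁) (hS₂ : 0 < S₂) (hS₃ : 0 < S₃) (hS₄ : 0 < S₄)
    (hcmin : 0 < cmin) (hminmax : cmin ≤ cmax)
    (D : Set ℝ) (hD : (-1 : ℝ) ∉ D)
    (zmax : ℝ) (hzmax : zmax ∈ D)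
    (hmax : ∀ z ∈ D, |(1 - z) / (1 + z)| ≤ |(1 - zmax) / (1 + zmax)|)
    (hδ : 1 ≤ |(1 - zmax) / (1 + zmax)|)
    (Ψ : ℝ → ℝ → Matrix (Fin 4) (Fin 4) ℝ)
    (hΨ : ∀ c z : ℝ, Ψ c z =
      (!![0, c, 1, 0;
          1 - z, 0, 0, 0;
          0, 0, 0, 1 - c₂ * h;
          0, -c₂, 1, 0] : Matrix (Fin 4) (Fin 4) ℝ)ᵀ *
        Matrix.diagonal ![S₁, S₂, S₃, S₄] *
        !![0, c, 1, 0;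
           1 - z, 0, 0, 0;
           0, 0, 0, 1 - c₂ * h;
           0, -c₂, 1, 0] -
      (!![1 + z, 0, 0, 0;
          0, -c, 1, 0;
          0, c₂, 1, 0;
          0, 0, 0, 1 + c₂ * h] : Matrix (Fin 4) (Fin 4) ℝ)ᵀ *
        Matrix.diagonal ![S₁, S₂, S₃, S₄] *
        !![1 + z, 0, 0, 0;
           0, -c, 1, 0;
           0, c₂, 1, 0;
           0, 0, 0, 1 + c₂ * h])
    (hmin : NegDef (Ψ cmin zmax)) (hmaxc : NegDef (Ψ cmax zmax)) :
    ∀ c ∈ Set.Icc cmin cmax, ∀ z ∈ D, NegDef (Ψ c z) := by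
  have form : ∀ c z (ξ : Fin 4 → ℝ), ξ ⬝ᵥ (Ψ c z).mulVec ξ =
      (S₂ * (1 - z) ^ 2 - S₁ * (1 + z) ^ 2) * ξ 0 ^ 2
        + innerForm c₂ h S₁ S₂ S₃ S₄ c (ξ 1) (ξ 2) (ξ 3) := by
    intro c z ξ
    rw [hΨ, Matrix.sub_mulVec, ← Matrix.mulVec_mulVec, ← Matrix.mulVec_mulVec,
      ← Matrix.mulVec_mulVec, ← Matrix.mulVec_mulVec]
    simp [innerForm, Matrix.mulVec, dotProduct, Fin.sum_univ_four]
    ring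
  have hne : ∀ z ∈ D, 0 < (1 + z) ^ 2 := by
    intro z hz
    have : 1 + z ≠ 0 := fun h0 => hD (by rwa [show (-1 : ℝ) = z by linarith])
    positivity
  -- `δ_max² S₂ < S₁`, from the test vector `e₀`.
  have hA : S₂ * ((1 - zmax) / (1 + zmax)) ^ 2 < S₁ := by
    have h0 := hmin ![1, 0, 0, 0] (fun h0 => by simpa using congrFun h0 0)
    rw [form] at h0
    simp [innerForm] at h0
    rw [div_pow, ← mul_div_assoc, div_lt_iff₀ (hne zmax hzmax)]
    exact h0
  have hS : S₂ ≤ S₁ := by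
    have h1 : 1 ≤ ((1 - zmax) / (1 + zmax)) ^ 2 := (one_le_sq_iff_one_le_abs _).2 hδ
    nlinarith
  intro c hc z hz ξ hξ
  have hAz : S₂ * (1 - z) ^ 2 - S₁ * (1 + z) ^ 2 < 0 := by
    have h1 : S₂ * ((1 - z) / (1 + z)) ^ 2 < S₁ :=
      (mul_le_mul_of_nonneg_left (sq_le_sq.2 (hmax z hz)) hS₂.le).trans_lt hA
    rw [div_pow, ← mul_div_assoc, div_lt_iff₀ (hne z hz)] at h1
    linarith
  rw [form]
  by_cases h0 : ![0, ξ 1, ξ 2, ξ 3] = 0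
  · have e1 : ξ 1 = 0 := by simpa using congrFun h0 1
    have e2 : ξ 2 = 0 := by simpa using congrFun h0 2
    have e3 : ξ 3 = 0 := by simpa using congrFun h0 3
    have e0 : ξ 0 ≠ 0 := fun e0 => hξ (by ext i; fin_cases i <;> assumption)
    have : 0 < ξ 0 ^ 2 := by positivity
    simpa [innerForm, e1, e2, e3] using mul_neg_of_neg_of_pos hAz this
  -- Dropping the coordinate `ξ₀` leaves a nonzero test vector for both extreme speeds.
  · have h₁ := hmin _ h0
    have h₂ := hmaxc _ h0
    rw [form] at h₁ h₂
    have := innerForm_neg_of_endpoints (c₂ := c₂) (h := h) (S₃ := S₃) (S₄ := S₄)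
      (x := ξ 1) (y := ξ 2) (w := ξ 3) hS hc (by simpa using h₁) (by simpa using h₂)
    linarith [mul_nonpos_of_nonpos_of_nonneg hAz.le (sq_nonneg (ξ 0))]
end
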